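/- arXiv:1707.06685 — 2 statements merged into one kernel-verified Lean document; each statement's English description precedes it below -/
import Mathlib

section
/- Let C be a category equipped with an orthogonal factorization system (E, M), let (S, η^S, μ^S) and (T, η^T, μ^T) be monads on C, and let m : S ⟶ T be a morphism of monads. Factorize m pointwise: for each object X choose e_X : S X → R X in E and n_X : R X → T X in M with m_X = n_X ∘ e_X, and let R : C ⥤ C be the induced functor making e : S ⟶ R and n : R ⟶ T natural transformations. Assume that E is closed under the functor S, i.e., S e ∈ E whenever e ∈ E. Then R carries a monad structure (R, η^R, μ^R) such that e : S ⟶ R and n : R ⟶ T are morphisms of monads (in particular η^R = e ∘ η^S, n ∘ η^R = η^T, e_X ∘ μ^S_X = μ^R_X ∘ e_{R X} ∘ S e_X, and n_X ∘ μ^R_X = μ^T_X ∘ n_{R X} ∘ T n_X for every object X). -/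
/-!
Monads are monoids in the monoidal category of endofunctors, and the argument works for a monoid
morphism `S ⟶ T` factored as `e : S ⟶ R` followed by `n : R ⟶ T` in any monoidal category. The unit
of `R` is that of `S` followed by `e`, and its multiplication is the diagonal filler of the square
`(e ⊗ e) ≫ (n ⊗ n) ≫ μ_T = (μ_S ≫ e) ≫ n` from `e ⊗ e` to `n`. Two parallel maps which agree after
precomposition with `e` or `(e ⊗ e) ⊗ e` and after postcomposition with `n` are equal, by uniqueness
of fillers. So each law for `R` follows from the same law for `S`, seen through `e`, and for `T`,
seen through `n`.

For endofunctors, fillers can be taken pointwise, being natural by uniqueness. The component of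
`e ⊗ e` at `X` is `S e_X` followed by `e_{R X}`: this is where closure of `E` under `S` enters.
-/

open CategoryTheory

universe v u

/-- An orthogonal factorization system `(E, M)` on a category `C`: two classes of
morphisms, each containing all isomorphisms and closed under composition, such that
every morphism factors as a morphism in `E` followed by a morphism in `M`, and `E` is
left orthogonal to `M` (unique diagonal fillers for commutative squares). -/
structure OrthFactSystem (C : Type u) [Category.{v} C] where
  E : MorphismProperty C
  M : MorphismProperty C
  E_iso : ∀ {X Y : C} (f : X ⟶ Y), IsIso f → E f
  M_iso : ∀ {X Y : C} (f : X ⟶ Y), IsIso f → M f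
  E_comp : ∀ {X Y Z : C} (f : X ⟶ Y) (g : Y ⟶ Z), E f → E g → E (f ≫ g)
  M_comp : ∀ {X Y Z : C} (f : X ⟶ Y) (g : Y ⟶ Z), M f → M g → M (f ≫ g)
  fact : ∀ {X Y : C} (f : X ⟶ Y),
    ∃ (Z : C) (e : X ⟶ Z) (n : Z ⟶ Y), E e ∧ M n ∧ e ≫ n = f
  orth : ∀ {A B X Y : C} (e : A ⟶ B) (n : X ⟶ Y), E e → M n →
    ∀ (v : A ⟶ X) (u : B ⟶ Y), e ≫ u = v ≫ n →
      ∃! d : B ⟶ X, e ≫ d = v ∧ d ≫ n = u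

/-- `e` is orthogonal to `n`: every commutative square from `e` to `n` has exactly one diagonal
filler. This is `HasLiftingProperty` together with uniqueness of the lift. It concerns two single
morphisms rather than two classes, so as to apply to natural transformations as well as to their
components. -/
def HasUniqueLiftingProperty {C : Type u} [Category.{v} C] {A B X Y : C}
    (e : A ⟶ B) (n : X ⟶ Y) : Prop :=
  ∀ (v : A ⟶ X) (u : B ⟶ Y), e ≫ u = v ≫ n → ∃! d : B ⟶ X, e ≫ d = v ∧ d ≫ n = u

namespace HasUniqueLiftingProperty

variable {C : Type u} [Category.{v} C]

theorem hom_ext {A B X Y : C} {e : A ⟶ B} {n : X ⟶ Y} (h : HasUniqueLiftingProperty e n)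
    {f g : B ⟶ X} (h_left : e ≫ f = e ≫ g) (h_right : f ≫ n = g ≫ n) : f = g :=
  (h (e ≫ g) (g ≫ n) (Category.assoc ..).symm).unique ⟨h_left, h_right⟩ ⟨rfl, rfl⟩

theorem of_app {J : Type*} [Category* J] {F G H K : J ⥤ C} {α : F ⟶ G} {β : H ⟶ K}
    (h : ∀ i j, HasUniqueLiftingProperty (α.app i) (β.app j)) :
    HasUniqueLiftingProperty α β := by
  intro v u sq
  choose d hd _ using fun j ↦ h j j (v.app j) (u.app j) (NatTrans.congr_app sq j)
  have d_left (j : J) : α.app j ≫ d j = v.app j := (hd j).1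
  have d_right (j : J) : d j ≫ β.app j = u.app j := (hd j).2
  have d_naturality {i j : J} (f : i ⟶ j) : G.map f ≫ d j = d i ≫ H.map f := by
    refine (h i j).hom_ext ?_ ?_
    · rw [← α.naturality_assoc, d_left, v.naturality, ← d_left, Category.assoc]
    · rw [Category.assoc, d_right, u.naturality, ← d_right, Category.assoc, Category.assoc,
        β.naturality]
  refine ⟨{ app := d, naturality := fun _ _ ↦ d_naturality }, ⟨?_, ?_⟩, fun d' hd' ↦ ?_⟩
  · ext j; exact d_left j
  · ext j; exact d_right j
  · ext j
    refine (h j j).hom_ext ?_ ?_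
    · exact (NatTrans.congr_app hd'.1 j).trans (d_left j).symm
    · exact (NatTrans.congr_app hd'.2 j).trans (d_right j).symm

end HasUniqueLiftingProperty

section Monoid

open MonoidalCategory MonObj

variable {D : Type*} [Category* D] [MonoidalCategory D]

section Transport

variable {M N : D} {oneM : 𝟙_ D ⟶ M} {oneN : 𝟙_ D ⟶ N} {mulM : M ⊗ M ⟶ M} {mulN : N ⊗ N ⟶ N}
  {f : M ⟶ N}

theorem whiskerRight_one_mul_comp (one_hom : oneM ≫ f = oneN)
    (mul_hom : mulM ≫ f = (f ⊗ₘ f) ≫ mulN) :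
    (oneM ▷ M ≫ mulM) ≫ f = 𝟙_ D ◁ f ≫ oneN ▷ N ≫ mulN := by
  rw [Category.assoc, mul_hom, whiskerRight_comp_tensorHom_assoc, one_hom, tensorHom_def'_assoc]

theorem whiskerLeft_one_mul_comp (one_hom : oneM ≫ f = oneN)
    (mul_hom : mulM ≫ f = (f ⊗ₘ f) ≫ mulN) :
    (M ◁ oneM ≫ mulM) ≫ f = f ▷ 𝟙_ D ≫ N ◁ oneN ≫ mulN := by
  rw [Category.assoc, mul_hom, whiskerLeft_comp_tensorHom_assoc, one_hom,
    MonoidalCategory.tensorHom_def_assoc]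

theorem whiskerRight_mul_mul_comp (mul_hom : mulM ≫ f = (f ⊗ₘ f) ≫ mulN) :
    (mulM ▷ M ≫ mulM) ≫ f = ((f ⊗ₘ f) ⊗ₘ f) ≫ mulN ▷ N ≫ mulN := by
  rw [Category.assoc, mul_hom, whiskerRight_comp_tensorHom_assoc, mul_hom,
    tensorHom_comp_whiskerRight_assoc]

theorem whiskerLeft_mul_mul_comp (mul_hom : mulM ≫ f = (f ⊗ₘ f) ≫ mulN) :
    (M ◁ mulM ≫ mulM) ≫ f = (f ⊗ₘ f ⊗ₘ f) ≫ N ◁ mulN ≫ mulN := by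
  rw [Category.assoc, mul_hom, whiskerLeft_comp_tensorHom_assoc, mul_hom,
    tensorHom_comp_whiskerLeft_assoc]

end Transport

variable {S R T : D} [MonObj S] [MonObj T] {e : S ⟶ R} {n : R ⟶ T} {one : 𝟙_ D ⟶ R}
  {mul : R ⊗ R ⟶ R}

theorem one_mul_of_hasUniqueLiftingProperty (h : HasUniqueLiftingProperty e n)
    (one_left : η[S] ≫ e = one) (mul_left : μ[S] ≫ e = (e ⊗ₘ e) ≫ mul)
    (one_right : one ≫ n = η[T]) (mul_right : mul ≫ n = (n ⊗ₘ n) ≫ μ[T]) :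
    one ▷ R ≫ mul = (λ_ R).hom := by
  rw [← Iso.inv_comp_eq_id]
  refine h.hom_ext ?_ ?_
  · rw [leftUnitor_inv_naturality_assoc, ← whiskerRight_one_mul_comp one_left mul_left,
      MonObj.one_mul, Iso.inv_hom_id_assoc, Category.comp_id]
  · rw [Category.assoc, whiskerRight_one_mul_comp one_right mul_right, MonObj.one_mul,
      leftUnitor_naturality, Iso.inv_hom_id_assoc, Category.id_comp]

theorem mul_one_of_hasUniqueLiftingProperty (h : HasUniqueLiftingProperty e n)
    (one_left : η[S] ≫ e = one) (mul_left : μ[S] ≫ e = (e ⊗ₘ e) ≫ mul)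
    (one_right : one ≫ n = η[T]) (mul_right : mul ≫ n = (n ⊗ₘ n) ≫ μ[T]) :
    R ◁ one ≫ mul = (ρ_ R).hom := by
  rw [← Iso.inv_comp_eq_id]
  refine h.hom_ext ?_ ?_
  · rw [rightUnitor_inv_naturality_assoc, ← whiskerLeft_one_mul_comp one_left mul_left,
      MonObj.mul_one, Iso.inv_hom_id_assoc, Category.comp_id]
  · rw [Category.assoc, whiskerLeft_one_mul_comp one_right mul_right, MonObj.mul_one,
      rightUnitor_naturality, Iso.inv_hom_id_assoc, Category.id_comp]

theorem mul_assoc_of_hasUniqueLiftingProperty (h : HasUniqueLiftingProperty ((e ⊗ₘ e) ⊗ₘ e) n)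
    (mul_left : μ[S] ≫ e = (e ⊗ₘ e) ≫ mul) (mul_right : mul ≫ n = (n ⊗ₘ n) ≫ μ[T]) :
    mul ▷ R ≫ mul = (α_ R R R).hom ≫ R ◁ mul ≫ mul := by
  refine h.hom_ext ?_ ?_
  · rw [associator_naturality_assoc, ← whiskerRight_mul_mul_comp mul_left,
      ← whiskerLeft_mul_mul_comp mul_left, MonObj.mul_assoc, Category.assoc]
  · rw [Category.assoc (α_ R R R).hom, whiskerRight_mul_mul_comp mul_right,
      whiskerLeft_mul_mul_comp mul_right, MonObj.mul_assoc, associator_naturality_assoc]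

theorem exists_monObj_of_hasUniqueLiftingProperty [IsMonHom (e ≫ n)]
    (h₁ : HasUniqueLiftingProperty e n) (h₂ : HasUniqueLiftingProperty (e ⊗ₘ e) n)
    (h₃ : HasUniqueLiftingProperty ((e ⊗ₘ e) ⊗ₘ e) n) :
    ∃ _ : MonObj R, IsMonHom e ∧ IsMonHom n := by
  have one_right : (η[S] ≫ e) ≫ n = η[T] := by
    rw [Category.assoc, IsMonHom.one_hom]
  have sq : (e ⊗ₘ e) ≫ (n ⊗ₘ n) ≫ μ[T] = (μ[S] ≫ e) ≫ n := by
    rw [Category.assoc, IsMonHom.mul_hom, tensorHom_comp_tensorHom_assoc]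
  obtain ⟨mul, ⟨mul_left, mul_right⟩, -⟩ := h₂ _ _ sq
  let monR : MonObj R :=
    { one := η[S] ≫ e
      mul := mul
      one_mul := one_mul_of_hasUniqueLiftingProperty h₁ rfl mul_left.symm one_right mul_right
      mul_one := mul_one_of_hasUniqueLiftingProperty h₁ rfl mul_left.symm one_right mul_right
      mul_assoc := mul_assoc_of_hasUniqueLiftingProperty h₃ mul_left.symm mul_right }
  exact ⟨monR, ⟨rfl, mul_left.symm⟩, ⟨one_right, mul_right⟩⟩

end Monoid

section Endofunctor

open MonoidalCategory

attribute [local instance] endofunctorMonoidalCategory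

variable {C : Type u} [Category.{v} C] {E : MorphismProperty C} [E.IsStableUnderComposition]

theorem functorCategory_tensorHom {F G H K : C ⥤ C} {α : F ⟶ G} {β : H ⟶ K}
    (hH : E ≤ E.inverseImage H) (hα : E.functorCategory C α) (hβ : E.functorCategory C β) :
    E.functorCategory C (α ⊗ₘ β) := by
  intro X
  -- The component unfolds to `β.app _ ≫ K.map _`, but only `H` is known to preserve `E`.
  have app_eq : (α ⊗ₘ β).app X = H.map (α.app X) ≫ β.app (G.obj X) := (β.naturality _).symm
  rw [app_eq]
  exact E.comp_mem _ _ (hH _ (hα X)) (hβ _)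

theorem exists_monObj_of_functorCategory {S R T : C ⥤ C} [MonObj S] [MonObj T]
    (e : S ⟶ R) (n : R ⟶ T) [IsMonHom (e ≫ n)] (hS : E ≤ E.inverseImage S)
    (he : E.functorCategory C e)
    (hn : ∀ {A B : C} (f : A ⟶ B), E f → ∀ X, HasUniqueLiftingProperty f (n.app X)) :
    ∃ _ : MonObj R, IsMonHom e ∧ IsMonHom n := by
  have orth {F G : C ⥤ C} {α : F ⟶ G} (hα : E.functorCategory C α) :
      HasUniqueLiftingProperty α n :=
    .of_app fun X ↦ hn (α.app X) (hα X)
  have hee : E.functorCategory C (e ⊗ₘ e) := functorCategory_tensorHom hS he he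
  have heee : E.functorCategory C ((e ⊗ₘ e) ⊗ₘ e) := functorCategory_tensorHom hS hee he
  exact exists_monObj_of_hasUniqueLiftingProperty (orth he) (orth hee) (orth heee)

theorem factorization_monad_structure_general {S T : Monad C} (m : S ⟶ T) {R : C ⥤ C}
    (e : (S : C ⥤ C) ⟶ R) (n : R ⟶ (T : C ⥤ C))
    (hfact : ∀ X : C, e.app X ≫ n.app X = m.toNatTrans.app X)
    (hS : E ≤ E.inverseImage (S : C ⥤ C)) (he : ∀ X : C, E (e.app X))
    (hn : ∀ {A B : C} (f : A ⟶ B), E f → ∀ X, HasUniqueLiftingProperty f (n.app X)) :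
    ∃ (η : 𝟭 C ⟶ R) (μ : R ⋙ R ⟶ R),
      (∀ X : C, η.app (R.obj X) ≫ μ.app X = 𝟙 (R.obj X)) ∧
      (∀ X : C, R.map (η.app X) ≫ μ.app X = 𝟙 (R.obj X)) ∧
      (∀ X : C, R.map (μ.app X) ≫ μ.app X = μ.app (R.obj X) ≫ μ.app X) ∧
      (∀ X : C, η.app X = S.η.app X ≫ e.app X) ∧
      (∀ X : C, S.μ.app X ≫ e.app X =
        (S : C ⥤ C).map (e.app X) ≫ e.app (R.obj X) ≫ μ.app X) ∧
      (∀ X : C, η.app X ≫ n.app X = T.η.app X) ∧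
      (∀ X : C, μ.app X ≫ n.app X =
        n.app (R.obj X) ≫ (T : C ⥤ C).map (n.app X) ≫ T.μ.app X) := by
  have hm : e ≫ n = m.toNatTrans := NatTrans.ext (funext hfact)
  have : IsMonHom (e ≫ n) := hm ▸ ((Monad.monadToMon C).map m).isMonHom_hom
  obtain ⟨_, _, _⟩ := exists_monObj_of_functorCategory e n hS he hn
  let R' := Monad.ofMon (.mk R)
  refine ⟨R'.η, R'.μ, R'.left_unit, R'.right_unit, R'.assoc,
    fun X ↦ ?_, fun X ↦ ?_, fun X ↦ ?_, fun X ↦ ?_⟩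
  · exact (NatTrans.congr_app (IsMonHom.one_hom e) X).symm
  · rw [e.naturality_assoc]
    exact (NatTrans.congr_app (IsMonHom.mul_hom e) X).trans (Category.assoc ..)
  · exact NatTrans.congr_app (IsMonHom.one_hom n) X
  · exact (NatTrans.congr_app (IsMonHom.mul_hom n) X).trans (Category.assoc ..)

end Endofunctor

/-- Let `m : S ⟶ T` be a monad morphism, factorized pointwise through a functor `R`
via natural transformations `e : S ⟶ R` (pointwise in `E`) and `n : R ⟶ T`
(pointwise in `M`).  If `E` is closed under the functor `S`, then `R` carries a monad
structure `(η, μ)` such that `e` and `n` are morphisms of monads. -/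
theorem factorization_monad_structure {C : Type u} [Category.{v} C]
    (fs : OrthFactSystem C)
    (S T : Monad C) (m : S ⟶ T)
    (R : C ⥤ C) (e : (S : C ⥤ C) ⟶ R) (n : R ⟶ (T : C ⥤ C))
    (he : ∀ X : C, fs.E (e.app X)) (hn : ∀ X : C, fs.M (n.app X))
    (hfact : ∀ X : C, e.app X ≫ n.app X = m.toNatTrans.app X)
    (hSE : ∀ {X Y : C} (f : X ⟶ Y), fs.E f → fs.E ((S : C ⥤ C).map f)) :
    ∃ (η : 𝟭 C ⟶ R) (μ : R ⋙ R ⟶ R),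
      -- monad laws for (R, η, μ)
      (∀ X : C, η.app (R.obj X) ≫ μ.app X = 𝟙 (R.obj X)) ∧
      (∀ X : C, R.map (η.app X) ≫ μ.app X = 𝟙 (R.obj X)) ∧
      (∀ X : C, R.map (μ.app X) ≫ μ.app X = μ.app (R.obj X) ≫ μ.app X) ∧
      -- e : S ⟶ R is a monad morphism: η^R = e ∘ η^S and e ∘ μ^S = μ^R ∘ (e ∗ e)
      (∀ X : C, η.app X = S.η.app X ≫ e.app X) ∧
      (∀ X : C, S.μ.app X ≫ e.app X =
        (S : C ⥤ C).map (e.app X) ≫ e.app (R.obj X) ≫ μ.app X) ∧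
      -- n : R ⟶ T is a monad morphism: n ∘ η^R = η^T and n ∘ μ^R = μ^T ∘ (n ∗ n)
      (∀ X : C, η.app X ≫ n.app X = T.η.app X) ∧
      (∀ X : C, μ.app X ≫ n.app X =
        n.app (R.obj X) ≫ (T : C ⥤ C).map (n.app X) ≫ T.μ.app X) := by
  have : fs.E.IsStableUnderComposition := ⟨fs.E_comp⟩
  exact factorization_monad_structure_general m e n hfact (fun _ _ ↦ hSE) he
    fun f hf X ↦ fs.orth f _ hf (hn X)
end

section
/- Let C be a category equipped with an orthogonal factorization system (E, M), let (S, η^S, μ^S) and (T, η^T, μ^T) be monads on C, let m : S ⟶ T be a morphism of monads, and assume E is closed under S. Let R : C ⥤ C, e : S ⟶ R (pointwise in E) and n : R ⟶ T (pointwise in M) be the induced pointwise factorization of m. Then the monad structure (η^R, μ^R) on R for which e and n are monad morphisms is unique: if (η, μ) and (η', μ') are two monad structures on the functor R such that e : S ⟶ R and n : R ⟶ T are monad morphisms for both, then η = η' and μ = μ'. -/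
/-!
The unit is forced by `e` preserving units. As `E` is closed under `S` and composition, the
horizontal composite `e ◫ e : S S ⟶ R R` is pointwise in `E`, while `n` is pointwise in `M`.
Compatibility of `e` and `n` with the multiplications says exactly that `μ` is a diagonal filler
of the square with sides `e ◫ e` and `n`, top `S.μ ≫ e` and bottom `(n ◫ n) ≫ T.μ`, which does
not depend on `μ`; such a filler is unique.
-/

open CategoryTheory

universe v u

/-- `(η, μ)` is a monad structure on the functor `R` for which both
`e : S ⟶ R` and `n : R ⟶ T` are morphisms of monads. -/
def IsCompatibleMonadStructure {C : Type u} [Category.{v} C]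
    (S T : Monad C) (R : C ⥤ C)
    (e : (S : C ⥤ C) ⟶ R) (n : R ⟶ (T : C ⥤ C))
    (η : 𝟭 C ⟶ R) (μ : R ⋙ R ⟶ R) : Prop :=
  -- monad laws for (R, η, μ)
  (∀ X : C, η.app (R.obj X) ≫ μ.app X = 𝟙 (R.obj X)) ∧
  (∀ X : C, R.map (η.app X) ≫ μ.app X = 𝟙 (R.obj X)) ∧
  (∀ X : C, R.map (μ.app X) ≫ μ.app X = μ.app (R.obj X) ≫ μ.app X) ∧
  -- e : S ⟶ R is a monad morphism
  (∀ X : C, η.app X = S.η.app X ≫ e.app X) ∧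
  (∀ X : C, S.μ.app X ≫ e.app X =
    (S : C ⥤ C).map (e.app X) ≫ e.app (R.obj X) ≫ μ.app X) ∧
  -- n : R ⟶ T is a monad morphism
  (∀ X : C, η.app X ≫ n.app X = T.η.app X) ∧
  (∀ X : C, μ.app X ≫ n.app X =
    n.app (R.obj X) ≫ (T : C ⥤ C).map (n.app X) ≫ T.μ.app X)

/-- Uniqueness half of the orthogonality of `E` and `M`: a commutative square with left side in
`E` and right side in `M` has at most one diagonal filler. It is phrased as joint cancellation, so
that no square has to be named. For example, it holds for the epimorphisms and any class `M`. -/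
def FillersUnique {C : Type*} [Category* C] (E M : MorphismProperty C) : Prop :=
  ∀ ⦃A B X Y : C⦄ ⦃p : A ⟶ B⦄ ⦃q : X ⟶ Y⦄, E p → M q →
    ∀ ⦃d d' : B ⟶ X⦄, p ≫ d = p ≫ d' → d ≫ q = d' ≫ q → d = d'

theorem FillersUnique.functorCategory {C : Type*} [Category* C] {E M : MorphismProperty C}
    (hEM : FillersUnique E M) (J : Type*) [Category* J] :
    FillersUnique (E.functorCategory J) (M.functorCategory J) := by
  intro F G H K α β hα hβ γ γ' hleft hright
  ext X
  exact hEM (hα X) (hβ X) (NatTrans.congr_app hleft X) (NatTrans.congr_app hright X)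

theorem functorCategory_hcomp {B C D : Type*} [Category* B] [Category* C] [Category* D]
    {P : MorphismProperty C} {Q : MorphismProperty D} [Q.IsStableUnderComposition]
    {F G : B ⥤ C} {H K : C ⥤ D} {α : F ⟶ G} {β : H ⟶ K}
    (hα : P.functorCategory B α) (hβ : Q.functorCategory C β) (hH : P ≤ Q.inverseImage H) :
    Q.functorCategory B (α ◫ β) := by
  intro X
  rw [NatTrans.hcomp_app, ← β.naturality]
  exact Q.comp_mem _ _ (hH _ (hα X)) (hβ (G.obj X))

namespace OrthFactSystem

variable {C : Type u} [Category.{v} C] (fs : OrthFactSystem C)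

instance : fs.E.IsStableUnderComposition where
  comp_mem := fs.E_comp

theorem fillersUnique : FillersUnique fs.E fs.M := by
  intro A B X Y p q hp hq d d' hleft hright
  have hsq : p ≫ d' ≫ q = (p ≫ d') ≫ q := (Category.assoc p d' q).symm
  exact (fs.orth p q hp hq (p ≫ d') (d' ≫ q) hsq).unique ⟨hleft, hright⟩ ⟨rfl, rfl⟩

end OrthFactSystem

namespace IsCompatibleMonadStructure

variable {C : Type u} [Category.{v} C] {S T : Monad C} {R : C ⥤ C}
  {e : (S : C ⥤ C) ⟶ R} {n : R ⟶ (T : C ⥤ C)} {η : 𝟭 C ⟶ R} {μ : R ⋙ R ⟶ R}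

theorem unit_eq (h : IsCompatibleMonadStructure S T R e n η μ) : η = S.η ≫ e := by
  obtain ⟨-, -, -, hη, -⟩ := h
  ext X
  exact hη X

theorem hcomp_comp_mul (h : IsCompatibleMonadStructure S T R e n η μ) :
    (e ◫ e) ≫ μ = S.μ ≫ e := by
  obtain ⟨-, -, -, -, hμ, -⟩ := h
  ext X
  simp only [NatTrans.comp_app, NatTrans.hcomp_app, ← e.naturality, Category.assoc]
  exact (hμ X).symm

theorem mul_comp (h : IsCompatibleMonadStructure S T R e n η μ) :
    μ ≫ n = (n ◫ n) ≫ T.μ := by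
  obtain ⟨-, -, -, -, -, -, hμ⟩ := h
  ext X
  simp only [NatTrans.comp_app, NatTrans.hcomp_app, Category.assoc]
  exact hμ X

end IsCompatibleMonadStructure

theorem factorization_monad_structure_unique_general {C : Type u} [Category.{v} C]
    {E M : MorphismProperty C} [E.IsStableUnderComposition] (hEM : FillersUnique E M)
    {S T : Monad C} {R : C ⥤ C} {e : (S : C ⥤ C) ⟶ R} {n : R ⟶ (T : C ⥤ C)}
    (he : E.functorCategory C e) (hn : M.functorCategory C n)
    (hSE : E ≤ E.inverseImage (S : C ⥤ C))
    {η η' : 𝟭 C ⟶ R} {μ μ' : R ⋙ R ⟶ R}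
    (h : IsCompatibleMonadStructure S T R e n η μ)
    (h' : IsCompatibleMonadStructure S T R e n η' μ') :
    η = η' ∧ μ = μ' := by
  have hee : E.functorCategory C (e ◫ e) := functorCategory_hcomp he he hSE
  have hleft : (e ◫ e) ≫ μ = (e ◫ e) ≫ μ' := h.hcomp_comp_mul.trans h'.hcomp_comp_mul.symm
  have hright : μ ≫ n = μ' ≫ n := h.mul_comp.trans h'.mul_comp.symm
  exact ⟨h.unit_eq.trans h'.unit_eq.symm, hEM.functorCategory C hee hn hleft hright⟩

/-- Uniqueness of the induced monad structure on the pointwise factorization `R` of a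
monad morphism `m : S ⟶ T` through `e : S ⟶ R` (pointwise in `E`) and `n : R ⟶ T`
(pointwise in `M`), assuming `E` is closed under `S`: any two monad structures on the
functor `R` making both `e` and `n` monad morphisms coincide. -/
theorem factorization_monad_structure_unique {C : Type u} [Category.{v} C]
    (fs : OrthFactSystem C)
    (S T : Monad C) (m : S ⟶ T)
    (R : C ⥤ C) (e : (S : C ⥤ C) ⟶ R) (n : R ⟶ (T : C ⥤ C))
    (he : ∀ X : C, fs.E (e.app X)) (hn : ∀ X : C, fs.M (n.app X))
    (hfact : ∀ X : C, e.app X ≫ n.app X = m.toNatTrans.app X)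
    (hSE : ∀ {X Y : C} (f : X ⟶ Y), fs.E f → fs.E ((S : C ⥤ C).map f))
    (η η' : 𝟭 C ⟶ R) (μ μ' : R ⋙ R ⟶ R)
    (h : IsCompatibleMonadStructure S T R e n η μ)
    (h' : IsCompatibleMonadStructure S T R e n η' μ') :
    η = η' ∧ μ = μ' :=
  factorization_monad_structure_unique_general fs.fillersUnique he hn
    (fun _ _ f hf => hSE f hf) h h'
end
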